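/- (Exact Type-I error control of the randomized (smoothed) weighted MC test.) Assume the proportionality hypothesis H₀^∝, define the lower p-value p⁻(d₀, …, d_m) = Σ_{i=0}^m w_i(d₀, …, d_m) · 1[S(d_i) > S(d₀)], and fix α ∈ [0,1]. Define the conditional rejection probability r_α(d₀,…,d_m) = 1 if p(d₀,…,d_m) ≤ α; r_α = (α − p⁻)/(p − p⁻) if p⁻ ≤ α < p; and r_α = 0 if α < p⁻. Then the randomized test which, given the tuple, rejects with probability r_α has Type-I error exactly α: Σ_{(d₀,…,d_m) ∈ 𝒟^(m+1)} h(d₀,…,d_m) · r_α(d₀,…,d_m) = α. -/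

import Mathlib

open scoped NNReal Classical BigOperators

noncomputable section

/-- The joint law of the tuple `(D̃⁽⁰⁾, …, D̃⁽ᵐ⁾)`:
`h(d₀, …, d_m) = f(d₀) · ∏_{k=1}^m q(d_k | d₀)`. Here `q e d` denotes `q(e | d)`. -/
def jointLaw {D : Type*} (f : D → ℝ≥0) (q : D → D → ℝ≥0) (m : ℕ)
    (d : Fin (m + 1) → D) : ℝ≥0 :=
  f (d 0) * ∏ k ∈ Finset.univ.erase (0 : Fin (m + 1)), q (d k) (d 0)

/-- `σ_i` : the involution of `𝒟^(m+1)` swapping coordinates `0` and `i`. -/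
def swapTuple {D : Type*} (m : ℕ) (i : Fin (m + 1)) (d : Fin (m + 1) → D) :
    Fin (m + 1) → D :=
  d ∘ Equiv.swap 0 i

/-- Numerator of the weight `w_i`: `f̂(d_i) · ∏_{k ≠ i} q(d_k | d_i)`. -/
def wNum {D : Type*} (q : D → D → ℝ≥0) (fhat : D → ℝ≥0) (m : ℕ)
    (i : Fin (m + 1)) (d : Fin (m + 1) → D) : ℝ≥0 :=
  fhat (d i) * ∏ k ∈ Finset.univ.erase i, q (d k) (d i)

/-- The weight `w_i(d₀, …, d_m)`; in `ℝ≥0`, division by zero yields `0`,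
matching the convention that `w_i = 0` when the denominator vanishes. -/
def weight {D : Type*} (q : D → D → ℝ≥0) (fhat : D → ℝ≥0) (m : ℕ)
    (i : Fin (m + 1)) (d : Fin (m + 1) → D) : ℝ≥0 :=
  wNum q fhat m i d / ∑ j, wNum q fhat m j d

/-- The weighted MC randomization p-value
`p(d₀, …, d_m) = Σ_{i=0}^m w_i · 1[S(d_i) ≥ S(d₀)]`. -/
def pValue {D : Type*} (q : D → D → ℝ≥0) (fhat : D → ℝ≥0) (m : ℕ)
    (S : D → ℝ) (d : Fin (m + 1) → D) : ℝ≥0 :=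
  ∑ i, weight q fhat m i d * (if S (d 0) ≤ S (d i) then 1 else 0)

/-- The lower p-value `p⁻(d₀, …, d_m) = Σ_{i=0}^m w_i · 1[S(d_i) > S(d₀)]`. -/
def pValueMinus {D : Type*} (q : D → D → ℝ≥0) (fhat : D → ℝ≥0) (m : ℕ)
    (S : D → ℝ) (d : Fin (m + 1) → D) : ℝ≥0 :=
  ∑ i, weight q fhat m i d * (if S (d 0) < S (d i) then 1 else 0)

/-- The conditional rejection probability `r_α` of the randomized (smoothed)
test: `1` if `p ≤ α`; `(α − p⁻)/(p − p⁻)` if `p⁻ ≤ α < p`; `0` if `α < p⁻`. -/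
def rejProb {D : Type*} (q : D → D → ℝ≥0) (fhat : D → ℝ≥0) (m : ℕ)
    (S : D → ℝ) (α : ℝ≥0) (d : Fin (m + 1) → D) : ℝ≥0 :=
  if pValue q fhat m S d ≤ α then 1
  else if pValueMinus q fhat m S d ≤ α then
    (α - pValueMinus q fhat m S d) / (pValue q fhat m S d - pValueMinus q fhat m S d)
  else 0

/-- The proportionality hypothesis `H₀^∝`. -/
def PropHyp {D : Type*} (f : D → ℝ≥0) (q : D → D → ℝ≥0) (fhat : D → ℝ≥0)
    (m : ℕ) : Prop :=
  ∀ d : Fin (m + 1) → D,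
    (∃ i, 0 < jointLaw f q m (swapTuple m i d)) →
      ∃ K : ℝ≥0, 0 < K ∧ ∀ i, fhat (d i) = K * f (d i)

/-!
For a fixed tuple, the events that the observed data set sits at position `i` have probabilities
proportional to `h (σ_i d)`, and under `H₀^∝` normalizing these probabilities yields exactly the
weights `w_i`. Conditionally on the unordered tuple, `p` and `p⁻` are therefore the upper tail and
the strict upper tail of the law of the score `S` under `w`, evaluated at a random score drawn from
that same law. A score `t` of mass `p - p⁻` contributes `min p α - min p⁻ α` to the rejection
probability, and since the strict tail at `t` is the tail at the next larger score, the
contributions telescope to `min 1 α = α`. Averaging over the swaps `σ_i`, each of which merely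
permutes the tuples, turns this conditional identity into the unconditional one.
-/

open scoped ENNReal

section FiniteWeights

/-- The rejection probability at level `α` of the smoothed test with lower p-value `a` and
p-value `b`, so that `rejProb` is its value at `pValueMinus` and `pValue`. -/
def smoothedRejection (a b α : ℝ≥0) : ℝ≥0 :=
  if b ≤ α then 1 else if a ≤ α then (α - a) / (b - a) else 0

lemma mul_smoothedRejection_add_min (a c α : ℝ≥0) :
    c * smoothedRejection a (a + c) α + min a α = min (a + c) α := by
  unfold smoothedRejection
  rw [add_tsub_cancel_left]
  split_ifs with htail hstrict
  · rw [min_eq_left htail, min_eq_left (le_self_add.trans htail), mul_one, add_comm]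
  · have hc : c ≠ 0 := by
      rintro rfl
      exact htail (by rwa [add_zero])
    rw [mul_div_cancel₀ _ hc, min_eq_left hstrict, tsub_add_cancel_of_le hstrict,
      min_eq_right (not_le.1 htail).le]
  · rw [min_eq_right (not_le.1 hstrict).le, min_eq_right (not_le.1 htail).le, mul_zero, zero_add]

lemma sum_mul_comp_eq_sum_image {ι κ R : Type*} [DecidableEq κ] [NonUnitalNonAssocSemiring R]
    (A : Finset ι) (w : ι → R) (s : ι → κ) (F : κ → R) :
    ∑ i ∈ A, w i * F (s i) = ∑ t ∈ A.image s, (∑ i ∈ A with s i = t, w i) * F t := by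
  rw [← Finset.sum_fiberwise_of_maps_to fun _ => Finset.mem_image_of_mem s]
  refine Finset.sum_congr rfl fun t _ => ?_
  rw [Finset.sum_mul]
  exact Finset.sum_congr rfl fun i hi => by rw [(Finset.mem_filter.1 hi).2]

variable {ι β : Type*} [LinearOrder β]

/-- The total weight of the indices in `A` whose score is at least `t`; `pValue` is the case of
all indices and `t` the observed score. The indicator form matches `pValue`. -/
def tailMass (A : Finset ι) (w : ι → ℝ≥0) (s : ι → β) (t : β) : ℝ≥0 :=
  ∑ i ∈ A, w i * if t ≤ s i then 1 else 0

/-- The total weight of the indices in `A` whose score exceeds `t`; the counterpart of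
`tailMass` for `pValueMinus`. -/
def strictTailMass (A : Finset ι) (w : ι → ℝ≥0) (s : ι → β) (t : β) : ℝ≥0 :=
  ∑ i ∈ A, w i * if t < s i then 1 else 0

lemma sum_mul_smoothedRejection_id (T : Finset β) (v : β → ℝ≥0) (α : ℝ≥0) :
    ∑ t ∈ T, v t * smoothedRejection (strictTailMass T v id t) (tailMass T v id t) α
      = min (∑ t ∈ T, v t) α := by
  induction T using Finset.induction_on_min with
  | empty => simp
  | insert b T hb ih =>
    have hbT : b ∉ T := fun hmem => (hb b hmem).false
    have tail_min : tailMass (insert b T) v id b = ∑ t ∈ T, v t + v b := by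
      rw [tailMass, Finset.sum_insert hbT, add_comm]
      simp +contextual [hb, le_of_lt]
    have strictTail_min : strictTailMass (insert b T) v id b = ∑ t ∈ T, v t := by
      rw [strictTailMass, Finset.sum_insert hbT]
      simp +contextual [hb]
    have tail_of_mem : ∀ t ∈ T, tailMass (insert b T) v id t = tailMass T v id t := by
      intro t ht
      simp [tailMass, Finset.sum_insert hbT, (hb t ht).not_ge]
    have strictTail_of_mem :
        ∀ t ∈ T, strictTailMass (insert b T) v id t = strictTailMass T v id t := by
      intro t ht
      simp [strictTailMass, Finset.sum_insert hbT, (hb t ht).not_gt]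
    have rest : ∑ t ∈ T, v t * smoothedRejection (strictTailMass (insert b T) v id t)
        (tailMass (insert b T) v id t) α = min (∑ t ∈ T, v t) α := by
      rw [← ih]
      exact Finset.sum_congr rfl fun t ht => by rw [tail_of_mem t ht, strictTail_of_mem t ht]
    rw [Finset.sum_insert hbT, rest, tail_min, strictTail_min, mul_smoothedRejection_add_min,
      Finset.sum_insert hbT, add_comm (v b)]

-- Grouping tied indices reduces to the case where each score is attained once.
lemma sum_mul_smoothedRejection (A : Finset ι) (w : ι → ℝ≥0) (s : ι → β) (α : ℝ≥0) :
    ∑ i ∈ A, w i * smoothedRejection (strictTailMass A w s (s i)) (tailMass A w s (s i)) α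
      = min (∑ i ∈ A, w i) α := by
  set v : β → ℝ≥0 := fun t => ∑ i ∈ A with s i = t, w i
  have tail_eq (t : β) : tailMass A w s t = tailMass (A.image s) v id t :=
    sum_mul_comp_eq_sum_image A w s fun u => if t ≤ u then 1 else 0
  have strictTail_eq (t : β) : strictTailMass A w s t = strictTailMass (A.image s) v id t :=
    sum_mul_comp_eq_sum_image A w s fun u => if t < u then 1 else 0
  have total_eq : ∑ t ∈ A.image s, v t = ∑ i ∈ A, w i :=
    Finset.sum_fiberwise_of_maps_to (fun _ => Finset.mem_image_of_mem s) w
  simp only [tail_eq, strictTail_eq]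
  rw [sum_mul_comp_eq_sum_image A w s fun t =>
      smoothedRejection (strictTailMass (A.image s) v id t) (tailMass (A.image s) v id t) α,
    sum_mul_smoothedRejection_id, total_eq]

end FiniteWeights

section InfiniteSums

lemma hasSum_of_tsum_eq_of_ne_zero {X M : Type*} [AddCommMonoid M] [TopologicalSpace M] {g : X → M}
    {a : M} (hg : ∑' x, g x = a) (ha : a ≠ 0) : HasSum g a := by
  have hsum : Summable g := by
    by_contra hnot
    exact ha (hg ▸ tsum_eq_zero_of_not_summable hnot)
  exact hg ▸ hsum.hasSum

lemma tsum_pi_fin_prod {n : ℕ} {X : Fin n → Type*} (g : ∀ k, X k → ℝ≥0∞) :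
    ∑' x : ∀ k, X k, ∏ k, g k (x k) = ∏ k, ∑' y, g k y := by
  induction n with
  | zero => simp
  | succ n ih =>
    rw [← (Fin.consEquiv X).tsum_eq, ENNReal.tsum_prod', Fin.prod_univ_succ,
      ← ih fun k => g k.succ]
    simp [Fin.consEquiv, Fin.prod_univ_succ, ENNReal.tsum_mul_left, ENNReal.tsum_mul_right]

lemma tsum_sum_comp_equiv {ι X : Type*} [Fintype ι] (σ : ι → X ≃ X) (F : X → ℝ≥0∞) :
    ∑' x, ∑ i, F (σ i x) = Fintype.card ι * ∑' x, F x := by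
  rw [Summable.tsum_finsetSum fun _ _ => ENNReal.summable]
  simp [Equiv.tsum_eq]

lemma tsum_eq_mul_tsum_of_sum_comp_equiv {ι X : Type*} [Fintype ι] [Nonempty ι]
    (σ : ι → X ≃ X) {F G : X → ℝ≥0∞} {a : ℝ≥0∞}
    (h : ∀ x, ∑ i, G (σ i x) = a * ∑ i, F (σ i x)) :
    ∑' x, G x = a * ∑' x, F x := by
  have hcard : (Fintype.card ι : ℝ≥0∞) ≠ 0 := by simp
  refine (ENNReal.mul_right_inj hcard (ENNReal.natCast_ne_top _)).1 ?_
  calc Fintype.card ι * ∑' x, G x = ∑' x, ∑ i, G (σ i x) := (tsum_sum_comp_equiv σ G).symm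
    _ = a * ∑' x, ∑ i, F (σ i x) := by rw [tsum_congr h, ENNReal.tsum_mul_left]
    _ = Fintype.card ι * (a * ∑' x, F x) := by rw [tsum_sum_comp_equiv, mul_left_comm]

end InfiniteSums

section WeightedTest

variable {D : Type*} (f : D → ℝ≥0) (q : D → D → ℝ≥0) (fhat : D → ℝ≥0) (S : D → ℝ) (m : ℕ)

lemma swapTuple_involutive (i : Fin (m + 1)) :
    Function.Involutive (swapTuple m i : (Fin (m + 1) → D) → _) := fun d => by
  funext k
  simp [swapTuple]

lemma wNum_comp_perm (σ : Equiv.Perm (Fin (m + 1))) (i : Fin (m + 1)) (d : Fin (m + 1) → D) :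
    wNum q fhat m i (d ∘ σ) = wNum q fhat m (σ i) d := by
  unfold wNum
  congr 1
  exact Finset.prod_equiv σ (by simp) fun _ _ => rfl

lemma weight_comp_perm (σ : Equiv.Perm (Fin (m + 1))) (i : Fin (m + 1)) (d : Fin (m + 1) → D) :
    weight q fhat m i (d ∘ σ) = weight q fhat m (σ i) d := by
  simp only [weight, wNum_comp_perm]
  rw [Equiv.sum_comp σ fun j => wNum q fhat m j d]

lemma jointLaw_swapTuple (i : Fin (m + 1)) (d : Fin (m + 1) → D) :
    jointLaw f q m (swapTuple m i d) = wNum q f m i d := by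
  change wNum q f m 0 (d ∘ Equiv.swap 0 i) = _
  rw [wNum_comp_perm, Equiv.swap_apply_left]

lemma pValue_swapTuple (i : Fin (m + 1)) (d : Fin (m + 1) → D) :
    pValue q fhat m S (swapTuple m i d)
      = tailMass Finset.univ (fun j => weight q fhat m j d) (S ∘ d) (S (d i)) := by
  simp only [pValue, swapTuple, weight_comp_perm, Function.comp_apply, Equiv.swap_apply_left]
  exact Equiv.sum_comp (Equiv.swap 0 i) fun j =>
    weight q fhat m j d * if S (d i) ≤ S (d j) then 1 else 0

lemma pValueMinus_swapTuple (i : Fin (m + 1)) (d : Fin (m + 1) → D) :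
    pValueMinus q fhat m S (swapTuple m i d)
      = strictTailMass Finset.univ (fun j => weight q fhat m j d) (S ∘ d) (S (d i)) := by
  simp only [pValueMinus, swapTuple, weight_comp_perm, Function.comp_apply, Equiv.swap_apply_left]
  exact Equiv.sum_comp (Equiv.swap 0 i) fun j =>
    weight q fhat m j d * if S (d i) < S (d j) then 1 else 0

lemma sum_weight_mul_rejProb_swapTuple (α : ℝ≥0) (d : Fin (m + 1) → D) :
    ∑ i, weight q fhat m i d * rejProb q fhat m S α (swapTuple m i d)
      = min (∑ i, weight q fhat m i d) α := by
  rw [← sum_mul_smoothedRejection Finset.univ (fun i => weight q fhat m i d) (S ∘ d) α]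
  refine Finset.sum_congr rfl fun i _ => ?_
  rw [rejProb, pValue_swapTuple, pValueMinus_swapTuple]
  rfl

variable {f q fhat S m}

lemma jointLaw_swapTuple_eq_sum_mul_weight (hprop : PropHyp f q fhat m) (d : Fin (m + 1) → D)
    (i : Fin (m + 1)) :
    jointLaw f q m (swapTuple m i d)
      = (∑ j, jointLaw f q m (swapTuple m j d)) * weight q fhat m i d := by
  by_cases hpos : ∃ j, 0 < jointLaw f q m (swapTuple m j d)
  · obtain ⟨K, hK, hfhat⟩ := hprop d hpos
    have wNum_fhat (j) : wNum q fhat m j d = K * wNum q f m j d := by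
      rw [wNum, hfhat, mul_assoc, wNum]
    have total_ne_zero : ∑ j, wNum q f m j d ≠ 0 := by
      obtain ⟨j, hj⟩ := hpos
      rw [jointLaw_swapTuple] at hj
      exact (Finset.sum_pos' (fun _ _ => zero_le) ⟨j, Finset.mem_univ j, hj⟩).ne'
    simp only [jointLaw_swapTuple, weight, wNum_fhat, ← Finset.mul_sum]
    rw [mul_div_mul_left _ _ hK.ne', mul_div_cancel₀ _ total_ne_zero]
  · have jointLaw_eq_zero (j) : jointLaw f q m (swapTuple m j d) = 0 := by
      simpa using not_exists.1 hpos j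
    simp [jointLaw_eq_zero]

lemma sum_jointLaw_mul_rejProb_swapTuple (hprop : PropHyp f q fhat m) {α : ℝ≥0} (hα : α ≤ 1)
    (d : Fin (m + 1) → D) :
    ∑ i, jointLaw f q m (swapTuple m i d) * rejProb q fhat m S α (swapTuple m i d)
      = α * ∑ i, jointLaw f q m (swapTuple m i d) := by
  set total := ∑ i, jointLaw f q m (swapTuple m i d) with total_def
  have jointLaw_eq (i) : jointLaw f q m (swapTuple m i d) = total * weight q fhat m i d :=
    jointLaw_swapTuple_eq_sum_mul_weight hprop d i
  have total_mul_sum_weight : total * ∑ i, weight q fhat m i d = total := by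
    simp only [Finset.mul_sum, ← jointLaw_eq, ← total_def]
  calc ∑ i, jointLaw f q m (swapTuple m i d) * rejProb q fhat m S α (swapTuple m i d)
      = total * ∑ i, weight q fhat m i d * rejProb q fhat m S α (swapTuple m i d) := by
        simp only [jointLaw_eq, mul_assoc, Finset.mul_sum]
    _ = min total (total * α) := by
        rw [sum_weight_mul_rejProb_swapTuple, mul_min, total_mul_sum_weight]
    _ = α * total := by
        rw [min_eq_right (mul_le_of_le_one_right' hα), mul_comm]

lemma tsum_jointLaw (hq : ∀ x, ∑' y, (q y x : ℝ≥0∞) = 1) :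
    ∑' d, (jointLaw f q m d : ℝ≥0∞) = ∑' x, (f x : ℝ≥0∞) := by
  have erase_zero : Finset.univ.erase (0 : Fin (m + 1)) = Finset.univ.map (Fin.succEmb m) := by
    rw [Fin.univ_succ, Finset.erase_cons]
    rfl
  have jointLaw_cons (x : D) (y : Fin m → D) :
      (jointLaw f q m (Fin.consEquiv (fun _ => D) (x, y)) : ℝ≥0∞)
        = f x * ∏ k, (q (y k) x : ℝ≥0∞) := by
    simp [jointLaw, Fin.consEquiv, erase_zero]
  rw [← (Fin.consEquiv fun _ => D).tsum_eq, ENNReal.tsum_prod']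
  refine tsum_congr fun x => ?_
  simp only [jointLaw_cons, ENNReal.tsum_mul_left]
  rw [tsum_pi_fin_prod fun (_ : Fin m) y => (q y x : ℝ≥0∞)]
  simp [hq]

theorem smoothed_weighted_mc_test_exact_general (hf : ∑' x, f x = 1) (hq : ∀ x, ∑' y, q y x = 1)
    (hprop : PropHyp f q fhat m) {α : ℝ≥0} (hα : α ≤ 1) :
    HasSum (fun d => jointLaw f q m d * rejProb q fhat m S α d) α := by
  have coe_tsum_eq_one {g : D → ℝ≥0} (hg : ∑' x, g x = 1) : ∑' x, (g x : ℝ≥0∞) = 1 :=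
    (ENNReal.hasSum_coe.2 (hasSum_of_tsum_eq_of_ne_zero hg one_ne_zero)).tsum_eq
  have jointLaw_total : ∑' d, (jointLaw f q m d : ℝ≥0∞) = 1 :=
    (tsum_jointLaw fun x => coe_tsum_eq_one (hq x)).trans (coe_tsum_eq_one hf)
  rw [← ENNReal.hasSum_coe, ENNReal.summable.hasSum_iff]
  calc ∑' d, ((jointLaw f q m d * rejProb q fhat m S α d : ℝ≥0) : ℝ≥0∞)
      = α * ∑' d, (jointLaw f q m d : ℝ≥0∞) :=
        tsum_eq_mul_tsum_of_sum_comp_equiv (fun i => (swapTuple_involutive m i).toPerm)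
          fun d => mod_cast sum_jointLaw_mul_rejProb_swapTuple hprop hα d
    _ = α := by rw [jointLaw_total, mul_one]

end WeightedTest

/-- **(Exact Type-I error control of the randomized (smoothed) weighted MC
test.)** Under `H₀^∝`, the randomized test rejecting with conditional
probability `r_α` has Type-I error exactly `α`. -/
theorem smoothed_weighted_mc_test_exact
    {D : Type*} [Countable D]
    (f : D → ℝ≥0) (q : D → D → ℝ≥0) (fhat : D → ℝ≥0) (S : D → ℝ)
    (m : ℕ) (hm : 1 ≤ m)
    (hf : ∑' d, f d = 1)
    (hq : ∀ d, ∑' e, q e d = 1)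
    (hprop : PropHyp f q fhat m)
    (α : ℝ≥0) (hα : α ≤ 1) :
    ∑' d : Fin (m + 1) → D, jointLaw f q m d * rejProb q fhat m S α d = α :=
  (smoothed_weighted_mc_test_exact_general hf hq hprop hα).tsum_eq
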